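/- For every δ₄ with 0 < δ₄ < 1 there exist α₄ > 0 and N ∈ ℕ such that for every n ≥ N, with probability at least 1 − δ₄ over the random l: for every sign pattern b ∈ {−1,1}^k and every y ∈ Y_m^b there exist y', y'' ∈ Y_m^b and integers t', t'' with 0 < t' < α₄ · s and 0 < t'' < α₄ · s such that f_l(y) − f_l(y') = t' mod n and f_l(y'') − f_l(y) = t'' mod n; that is, every mapped point of Y_m^b has mapped neighbors on both sides at distance of order the standard distance s. -/

import Mathlib

/-!
Every residue `a`, mapped or not, has the required neighbours. A left neighbour is sought as
`a = f_l(y') + (p + q + 1)` with `y' = b (u + v)`, `0 ≤ uᵢ, vᵢ < M` and `0 ≤ p, q < L`; right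
neighbours of `a` are the negatives of left neighbours of `-a` for the sign pattern `-b`. Here
`M` is about `m / 2` and `L` is of order `α s`.

By Fourier inversion the number of representations of any residue, times `n`, is `M^{2k} L²` from
the trivial character plus an error of absolute value at most
`∑_{ψ ≠ 0} ∏ᵢ |D_M(ψ(lᵢ))|² |D_L(ψ(1))|²`, where `D_M(z) = ∑_{u < M} z^u`. This error bound depends
neither on the residue nor on `b`, so one event, that it is less than `M^{2k} L²`, gives all
neighbours at once, and Markov's inequality reduces the theorem to its mean over `l`.

If `ψ` has order at least `M`, the mean of `|D_M(ψ(x))|²` over `x` is exactly `M`; by Parseval over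
`ψ` such characters contribute at most `M^k n L`. If `ψ ≠ 0` has order less than `M`, then
`|D_L(ψ(1))| ≤ M` because `ψ(1) ≠ 1` is a root of unity of order less than `M`; such characters
contribute at most `n M^{2k+2}`. Relative to `M^{2k} L²` these are of order `1 / α` and
`m^{2k+2} / (n α²)`, and `m^{2k+2} = O(n)` by the choice of `m`.
-/

open scoped BigOperators

noncomputable section

attribute [local instance 10] Classical.propDecidable

/-- Cycle distance on `ZMod n`: `min(r, n - r)` where `r` is the representative of `y - x`. -/
def cycleDist (n : ℕ) [NeZero n] (x y : ZMod n) : ℕ :=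
  min (y - x).val (n - (y - x).val)

/-- `f_l(y) = Σ yᵢ lᵢ` in `ZMod n`. -/
def fl {n k : ℕ} [NeZero n] (l : Fin k → ZMod n) (y : Fin k → ℤ) : ZMod n :=
  ∑ i, (y i : ZMod n) * l i

/-- Probability of `E` when `l₁,…,l_k` are independent uniform elements of `ZMod n`,
modelled as a uniform element of the product space. -/
def lProb (n k : ℕ) [NeZero n] (E : (Fin k → ZMod n) → Prop) : ℝ :=
  ((Finset.univ.filter E).card : ℝ) / (Fintype.card (Fin k → ZMod n) : ℝ)

/-- `b` is a sign pattern in `{-1,1}^k`. -/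
def IsSign {k : ℕ} (b : Fin k → ℤ) : Prop := ∀ i, b i = 1 ∨ b i = -1

/-- Membership in `Y_m^b = {y ∈ ℤ^k : 0 ≤ bᵢ yᵢ < m}`. -/
def inYmb {k : ℕ} (b : Fin k → ℤ) (m : ℕ) (y : Fin k → ℤ) : Prop :=
  ∀ i, 0 ≤ b i * y i ∧ b i * y i < (m : ℤ)

/-- `m = m(n) = ⌈c n^{1/(2k+2)}⌉`. -/
def mOf (k : ℕ) (c : ℝ) (n : ℕ) : ℕ := ⌈c * (n : ℝ) ^ ((1 : ℝ) / (2 * (k : ℝ) + 2))⌉₊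

/-- The standard distance `s = s(n) = n / m^k`. -/
def sOf (k : ℕ) (c : ℝ) (n : ℕ) : ℝ := (n : ℝ) / (mOf k c n : ℝ) ^ k

open Finset Filter

section DirichletSum

/-- The Dirichlet kernel `1 + z + ⋯ + z ^ (M - 1)`. It is evaluated at `z = ψ x`, where it is the
Fourier transform of the progression `0, x, …, (M - 1) x` at the character `ψ`. -/
def dirichletSum (M : ℕ) (z : ℂ) : ℂ := ∑ u ∈ range M, z ^ u

lemma norm_dirichletSum_le {z : ℂ} (hz : ‖z‖ = 1) (M : ℕ) : ‖dirichletSum M z‖ ≤ M := by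
  simpa [dirichletSum, hz] using norm_sum_le (range M) (z ^ ·)

lemma norm_dirichletSum_inv {z : ℂ} (hz : ‖z‖ = 1) (M : ℕ) :
    ‖dirichletSum M z⁻¹‖ = ‖dirichletSum M z‖ := by
  rw [Complex.inv_eq_conj hz, ← RCLike.norm_conj (dirichletSum M z)]
  simp only [dirichletSum, map_sum, map_pow]

/-- The powers of `z` cancel over full periods, so only the incomplete last period remains. -/
lemma norm_dirichletSum_le_of_pow_eq_one {z : ℂ} {d : ℕ} (hd : d ≠ 0) (hz : z ≠ 1)
    (hzd : z ^ d = 1) (L : ℕ) : ‖dirichletSum L z‖ ≤ d := by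
  have hmod : dirichletSum L z = dirichletSum (L % d) z := by
    rw [dirichletSum, dirichletSum, geom_sum_eq hz, geom_sum_eq hz, pow_eq_pow_mod L hzd]
  calc ‖dirichletSum L z‖ ≤ (L % d : ℕ) :=
        hmod ▸ norm_dirichletSum_le (Complex.norm_eq_one_of_pow_eq_one hzd hd) _
    _ ≤ d := mod_cast (Nat.mod_lt L (Nat.pos_of_ne_zero hd)).le

end DirichletSum

section Characters

variable {G ι κ : Type*} [AddCommGroup G] [Fintype ι] [Fintype κ]

lemma sum_addChar_add (ψ : AddChar G ℂ) (X : ι → G) (Y : κ → G) :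
    ∑ a : ι × κ, ψ (X a.1 + Y a.2) = (∑ i, ψ (X i)) * ∑ j, ψ (Y j) := by
  simp only [AddChar.map_add_eq_mul, Fintype.sum_mul_sum, Fintype.sum_prod_type]

lemma sum_addChar_nsmul (ψ : AddChar G ℂ) (L : ℕ) (g : G) :
    ∑ p : Fin L, ψ ((p : ℕ) • g) = dirichletSum L (ψ g) := by
  simp only [AddChar.map_nsmul_eq_pow, dirichletSum, Finset.sum_range]

lemma sum_addChar_sum_nsmul [DecidableEq ι] (ψ : AddChar G ℂ) (M : ℕ) (x : ι → G) :
    ∑ u : ι → Fin M, ψ (∑ i, (u i : ℕ) • x i) = ∏ i, dirichletSum M (ψ (x i)) := by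
  simp only [← sum_addChar_nsmul, Fintype.prod_sum]
  exact Finset.sum_congr rfl fun u _ => map_prod ψ.toMonoidHom _ univ

lemma addChar_apply_ne_one {ψ : AddChar G ℂ} (hψ : ψ ≠ 0) {g : G}
    (hg : AddSubgroup.zmultiples g = ⊤) : ψ g ≠ 1 := fun h => by
  refine hψ (AddChar.eq_zero_iff.2 fun x => ?_)
  obtain ⟨t, rfl⟩ := AddSubgroup.mem_zmultiples_iff.1 (hg ▸ AddSubgroup.mem_top x)
  rw [AddChar.map_zsmul_eq_zpow, h, one_zpow]

section Finite

variable [Finite G]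

lemma norm_dirichletSum_le_addOrderOf {ψ : AddChar G ℂ} {g : G} (hg : ψ g ≠ 1) (L : ℕ) :
    ‖dirichletSum L (ψ g)‖ ≤ addOrderOf ψ := by
  refine norm_dirichletSum_le_of_pow_eq_one (addOrderOf_pos ψ).ne' hg ?_ L
  rw [← AddChar.nsmul_apply, addOrderOf_nsmul_eq_zero, AddChar.zero_apply]

/-- By Fourier inversion, an element outside the range would force the contribution of the trivial
character to cancel against all the others. -/
lemma surjective_of_sum_norm_sum_addChar_lt {X : ι → G}
    (hX : ∑ ψ ∈ {(0 : AddChar G ℂ)}ᶜ, ‖∑ i, ψ (X i)‖ < Fintype.card ι) : X.Surjective := by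
  intro g
  by_contra! hg
  have hinv : ∑ ψ : AddChar G ℂ, ψ (-g) * ∑ i, ψ (X i) = 0 := by
    calc ∑ ψ : AddChar G ℂ, ψ (-g) * ∑ i, ψ (X i) = ∑ i, ∑ ψ : AddChar G ℂ, ψ (-g + X i) := by
          simp only [mul_sum, AddChar.map_add_eq_mul]
          exact sum_comm
      _ = 0 := sum_eq_zero fun i _ => AddChar.sum_apply_eq_zero_iff_ne_zero.2 fun h =>
          hg i (neg_add_eq_zero.1 h).symm
  rw [Fintype.sum_eq_add_sum_compl 0] at hinv
  refine hX.not_ge ?_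
  calc (Fintype.card ι : ℝ) = ‖∑ ψ ∈ {(0 : AddChar G ℂ)}ᶜ, ψ (-g) * ∑ i, ψ (X i)‖ := by
        rw [← norm_neg, ← eq_neg_of_add_eq_zero_left hinv]
        simp
    _ ≤ ∑ ψ ∈ {(0 : AddChar G ℂ)}ᶜ, ‖∑ i, ψ (X i)‖ :=
        (norm_sum_le _ _).trans_eq <| by simp only [norm_mul, AddChar.norm_apply, one_mul]

end Finite

variable [Fintype G]

lemma sum_norm_sq_sum_addChar {α : Type*} {s : Finset α} {χ : α → AddChar G ℂ}
    (hχ : Set.InjOn χ s) : ∑ x, ‖∑ i ∈ s, χ i x‖ ^ 2 = (Fintype.card G : ℝ) * #s := by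
  have horth : ∀ i ∈ s, ∀ j ∈ s,
      ∑ x, (χ i - χ j) x = if j = i then (Fintype.card G : ℂ) else 0 := fun i hi j hj => by
    rw [AddChar.sum_eq_ite]
    simp only [sub_eq_zero, hχ.eq_iff hi hj, eq_comm]
  have hexpand : ∀ x, ((‖∑ i ∈ s, χ i x‖ : ℂ)) ^ 2 = ∑ i ∈ s, ∑ j ∈ s, (χ i - χ j) x := fun x => by
    simp only [← Complex.mul_conj', map_sum, sum_mul_sum, ← AddChar.map_neg_eq_conj,
      AddChar.sub_apply]
  have hcomplex : ((∑ x, ‖∑ i ∈ s, χ i x‖ ^ 2 : ℝ) : ℂ) = (Fintype.card G : ℂ) * #s := by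
    push_cast
    calc ∑ x, (‖∑ i ∈ s, χ i x‖ : ℂ) ^ 2 = ∑ i ∈ s, ∑ j ∈ s, ∑ x, (χ i - χ j) x := by
          simp only [hexpand]
          rw [sum_comm]
          exact sum_congr rfl fun i _ => sum_comm
      _ = ∑ i ∈ s, ∑ j ∈ s, if j = i then (Fintype.card G : ℂ) else 0 :=
          sum_congr rfl fun i hi => sum_congr rfl fun j hj => horth i hi j hj
      _ = (Fintype.card G : ℂ) * #s := by simp [mul_comm]
  exact_mod_cast hcomplex

lemma sum_norm_dirichletSum_sq {ψ : AddChar G ℂ} {M : ℕ} (hM : M ≤ addOrderOf ψ) :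
    ∑ x, ‖dirichletSum M (ψ x)‖ ^ 2 = (Fintype.card G : ℝ) * M := by
  have hinj : Set.InjOn (· • ψ) (range M : Set ℕ) :=
    nsmul_injOn_Iio_addOrderOf.mono fun u hu => (mem_range.1 hu).trans_le hM
  simpa [dirichletSum] using sum_norm_sq_sum_addChar hinj

lemma sum_addChar_norm_dirichletSum_sq {g : G} {L : ℕ} (hL : L ≤ addOrderOf g) :
    ∑ ψ : AddChar G ℂ, ‖dirichletSum L (ψ g)‖ ^ 2 = (Fintype.card G : ℝ) * L := by
  rw [← addOrderOf_injective AddChar.doubleDualEmb AddChar.doubleDualEmb_injective] at hL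
  simpa only [AddChar.doubleDualEmb_apply, AddChar.card_eq] using sum_norm_dirichletSum_sq hL

end Characters

section FourierTail

variable {G ι : Type*} [AddCommGroup G] [Fintype ι]

section Finite

variable [Finite G]

/-- The total weight of the nontrivial characters in the Fourier expansion of the number of
representations of an element of `G` as `∑ i, (uᵢ + vᵢ) • xᵢ + (p + q) • g` with `uᵢ, vᵢ < M` and
`p, q < L`. -/
def fourierTail (M L : ℕ) (g : G) (x : ι → G) : ℝ :=
  ∑ ψ ∈ {(0 : AddChar G ℂ)}ᶜ, (∏ i, ‖dirichletSum M (ψ (x i))‖ ^ 2) * ‖dirichletSum L (ψ g)‖ ^ 2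

lemma fourierTail_nonneg (M L : ℕ) (g : G) (x : ι → G) : 0 ≤ fourierTail M L g x := by
  unfold fourierTail
  positivity

lemma fourierTail_congr_neg {M L : ℕ} {g : G} {x y : ι → G} (h : ∀ i, y i = x i ∨ y i = -x i) :
    fourierTail M L g y = fourierTail M L g x := by
  have hnorm : ∀ (ψ : AddChar G ℂ) i,
      ‖dirichletSum M (ψ (y i))‖ = ‖dirichletSum M (ψ (x i))‖ := fun ψ i => by
    rcases h i with h | h
    · rw [h]
    · rw [h, AddChar.map_neg_eq_inv, norm_dirichletSum_inv (ψ.norm_apply _)]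
  simp only [fourierTail, hnorm]

lemma exists_sum_nsmul_add_nsmul_eq {M L : ℕ} {g : G} {x : ι → G}
    (h : fourierTail M L g x < (M : ℝ) ^ (2 * Fintype.card ι) * (L : ℝ) ^ 2) (y : G) :
    ∃ (u v : ι → Fin M) (p q : Fin L),
      ∑ i, (u i + v i : ℕ) • x i + (p + q : ℕ) • g = y := by
  let box : (ι → Fin M) → G := fun u => ∑ i, (u i : ℕ) • x i
  let segment : Fin L → G := fun p => (p : ℕ) • g
  let boxes : (ι → Fin M) × (ι → Fin M) → G := fun a => box a.1 + box a.2
  let segments : Fin L × Fin L → G := fun a => segment a.1 + segment a.2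
  have hsum : ∀ ψ : AddChar G ℂ, ∑ a : _ × _, ψ (boxes a.1 + segments a.2) =
      (∏ i, dirichletSum M (ψ (x i))) ^ 2 * dirichletSum L (ψ g) ^ 2 := fun ψ => by
    rw [sum_addChar_add ψ boxes segments, sum_addChar_add ψ box box,
      sum_addChar_add ψ segment segment, sum_addChar_sum_nsmul, sum_addChar_nsmul, sq, sq]
  have hsurj : (fun a : _ × _ => boxes a.1 + segments a.2).Surjective := by
    refine surjective_of_sum_norm_sum_addChar_lt ?_
    simp only [hsum, norm_mul, norm_pow, norm_prod, ← prod_pow]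
    refine h.trans_eq ?_
    simp only [Fintype.card_prod, Fintype.card_fun, Fintype.card_fin, Nat.cast_mul, Nat.cast_pow]
    ring
  obtain ⟨⟨⟨u, v⟩, p, q⟩, ha⟩ := hsurj y
  refine ⟨u, v, p, q, ?_⟩
  simpa only [add_nsmul, sum_add_distrib] using ha

end Finite

variable [Fintype G]

/-- Characters of order at least `M` are covered by Parseval's identity, those of smaller order by
the pointwise bound on the Dirichlet kernel at `ψ g`. -/
lemma sum_prod_norm_dirichletSum_sq_mul_le [DecidableEq ι] {ψ : AddChar G ℂ} {g : G}
    (hg : ψ g ≠ 1) (M L : ℕ) :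
    ∑ x : ι → G, (∏ i, ‖dirichletSum M (ψ (x i))‖ ^ 2) * ‖dirichletSum L (ψ g)‖ ^ 2 ≤
      (Fintype.card G : ℝ) ^ Fintype.card ι *
        ((M : ℝ) ^ Fintype.card ι * ‖dirichletSum L (ψ g)‖ ^ 2 +
          (M : ℝ) ^ (2 * Fintype.card ι + 2)) := by
  set k := Fintype.card ι
  rw [← sum_mul, ← Fintype.prod_sum fun (_ : ι) (a : G) => ‖dirichletSum M (ψ a)‖ ^ 2,
    prod_const, card_univ]
  rcases le_or_gt M (addOrderOf ψ) with hM | hM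
  · rw [sum_norm_dirichletSum_sq hM, mul_pow, mul_assoc]
    gcongr
    exact le_add_of_nonneg_right (by positivity)
  · have hsum : ∑ a, ‖dirichletSum M (ψ a)‖ ^ 2 ≤ Fintype.card G * (M : ℝ) ^ 2 := by
      rw [← nsmul_eq_mul, ← card_univ]
      refine sum_le_card_nsmul _ _ _ fun a _ => ?_
      gcongr
      exact norm_dirichletSum_le (ψ.norm_apply a) M
    have hker : ‖dirichletSum L (ψ g)‖ ≤ M :=
      (norm_dirichletSum_le_addOrderOf hg L).trans (mod_cast hM.le)
    calc (∑ a, ‖dirichletSum M (ψ a)‖ ^ 2) ^ k * ‖dirichletSum L (ψ g)‖ ^ 2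
        ≤ (Fintype.card G * (M : ℝ) ^ 2) ^ k * (M : ℝ) ^ 2 := by gcongr
      _ = (Fintype.card G : ℝ) ^ k * (M : ℝ) ^ (2 * k + 2) := by ring
      _ ≤ _ := by
          gcongr
          exact le_add_of_nonneg_left (by positivity)

lemma sum_fourierTail_le [DecidableEq ι] {g : G} (hg : AddSubgroup.zmultiples g = ⊤) {L : ℕ}
    (hL : L ≤ Fintype.card G) (M : ℕ) :
    ∑ x : ι → G, fourierTail M L g x ≤ (Fintype.card G : ℝ) ^ Fintype.card ι *
      ((M : ℝ) ^ Fintype.card ι * (Fintype.card G * L) +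
        Fintype.card G * (M : ℝ) ^ (2 * Fintype.card ι + 2)) := by
  have hLg : L ≤ addOrderOf g := by
    rwa [← Nat.card_zmultiples, hg, AddSubgroup.card_top, Nat.card_eq_fintype_card]
  simp only [fourierTail]
  rw [sum_comm]
  calc _ ≤ ∑ ψ ∈ {(0 : AddChar G ℂ)}ᶜ, (Fintype.card G : ℝ) ^ Fintype.card ι *
        ((M : ℝ) ^ Fintype.card ι * ‖dirichletSum L (ψ g)‖ ^ 2 +
          (M : ℝ) ^ (2 * Fintype.card ι + 2)) :=
        sum_le_sum fun ψ hψ => sum_prod_norm_dirichletSum_sq_mul_le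
          (addChar_apply_ne_one (by simpa using hψ) hg) M L
    _ ≤ ∑ ψ : AddChar G ℂ, (Fintype.card G : ℝ) ^ Fintype.card ι *
        ((M : ℝ) ^ Fintype.card ι * ‖dirichletSum L (ψ g)‖ ^ 2 +
          (M : ℝ) ^ (2 * Fintype.card ι + 2)) :=
        sum_le_univ_sum_of_nonneg fun ψ => by positivity
    _ = _ := by
        rw [← mul_sum, sum_add_distrib, ← mul_sum, sum_addChar_norm_dirichletSum_sq hLg]
        simp [AddChar.card_eq]

end FourierTail

section Probability

variable {n k : ℕ} [NeZero n]

lemma lProb_mono {E E' : (Fin k → ZMod n) → Prop} (h : ∀ l, E l → E' l) :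
    lProb n k E ≤ lProb n k E' := by
  unfold lProb
  gcongr
  exact h _

lemma one_sub_le_lProb_of_sum_le {F : (Fin k → ZMod n) → ℝ} (hF : ∀ l, 0 ≤ F l) {W δ : ℝ}
    (hW : 0 < W) (hsum : ∑ l, F l ≤ (n : ℝ) ^ k * (δ * W)) :
    1 - δ ≤ lProb n k (fun l => F l < W) := by
  have hcard : (Fintype.card (Fin k → ZMod n) : ℝ) = (n : ℝ) ^ k := by simp [ZMod.card]
  have hn : (0 : ℝ) < (n : ℝ) ^ k := by
    rw [← hcard]
    exact_mod_cast Fintype.card_pos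
  have hcompl : (#{l | F l < W} : ℝ) + #{l | ¬ F l < W} = (n : ℝ) ^ k := by
    rw [← hcard, ← card_univ]
    exact_mod_cast card_filter_add_card_filter_not (F · < W)
  have hmarkov : (#{l | ¬ F l < W} : ℝ) * W ≤ (n : ℝ) ^ k * δ * W := by
    calc (#{l | ¬ F l < W} : ℝ) * W ≤ ∑ l with ¬ F l < W, F l := by
          rw [← nsmul_eq_mul]
          exact card_nsmul_le_sum _ _ _ fun l hl => not_lt.1 (mem_filter.1 hl).2
      _ ≤ ∑ l, F l := sum_le_univ_sum_of_nonneg hF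
      _ ≤ _ := hsum.trans_eq (mul_assoc _ _ _).symm
  rw [lProb, hcard, le_div_iff₀ hn]
  linarith [le_of_mul_le_mul_right hmarkov hW]

lemma zmultiples_one_zmod (n : ℕ) : AddSubgroup.zmultiples (1 : ZMod n) = ⊤ :=
  (AddSubgroup.eq_top_iff' _).2 fun a =>
    AddSubgroup.mem_zmultiples_iff.2 ⟨a.cast, by simp⟩

lemma one_sub_le_lProb_fourierTail_lt {M L : ℕ} (hM : 0 < M) (hL : 0 < L) (hLn : L ≤ n) {δ : ℝ}
    (hbound : (M : ℝ) ^ k * (n * L) + n * (M : ℝ) ^ (2 * k + 2) ≤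
      δ * ((M : ℝ) ^ (2 * k) * (L : ℝ) ^ 2)) :
    1 - δ ≤ lProb n k (fun l => fourierTail M L 1 l < (M : ℝ) ^ (2 * k) * (L : ℝ) ^ 2) := by
  refine one_sub_le_lProb_of_sum_le (fourierTail_nonneg M L 1) (by positivity) ?_
  have hmean := sum_fourierTail_le (ι := Fin k) (zmultiples_one_zmod n)
    (hLn.trans_eq (ZMod.card n).symm) M
  rw [ZMod.card, Fintype.card_fin] at hmean
  exact hmean.trans (by gcongr)

end Probability

section SignPatterns

variable {n k : ℕ} [NeZero n] {b : Fin k → ℤ}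

lemma IsSign.neg (hb : IsSign b) : IsSign (-b) := fun i => by
  rcases hb i with h | h <;> simp [h]

lemma inYmb.neg {m : ℕ} {y : Fin k → ℤ} (hy : inYmb (-b) m y) : inYmb b m (-y) := fun i => by
  simpa using hy i

lemma fl_neg (l : Fin k → ZMod n) (y : Fin k → ℤ) : fl l (-y) = -fl l y := by
  simp [fl]

lemma IsSign.inYmb_mul (hb : IsSign b) {m : ℕ} {u : Fin k → ℕ} (hu : ∀ i, u i < m) :
    inYmb b m (fun i => b i * u i) := fun i => by
  have := hu i
  rcases hb i with h | h <;> simp only [h] <;> omega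

lemma exists_inYmb_fl_add_eq {M L m : ℕ} {l : Fin k → ZMod n}
    (hl : fourierTail M L 1 l < (M : ℝ) ^ (2 * k) * (L : ℝ) ^ 2) (hM : 2 * M ≤ m + 1)
    (hb : IsSign b) (a : ZMod n) :
    ∃ y, inYmb b m y ∧ ∃ t : ℤ, 0 < t ∧ t < 2 * L ∧ fl l y + t = a := by
  have hl' : fourierTail M L 1 (fun i => (b i : ZMod n) * l i) <
      (M : ℝ) ^ (2 * Fintype.card (Fin k)) * (L : ℝ) ^ 2 := by
    rwa [Fintype.card_fin, fourierTail_congr_neg (x := l) fun i => by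
      rcases hb i with h | h <;> simp [h]]
  obtain ⟨u, v, p, q, h⟩ := exists_sum_nsmul_add_nsmul_eq hl' (a - 1)
  refine ⟨fun i => b i * (u i + v i : ℕ), hb.inYmb_mul fun i => by omega, p + q + 1, by omega,
    by omega, ?_⟩
  simp only [nsmul_eq_mul, mul_one] at h
  calc fl l (fun i => b i * (u i + v i : ℕ)) + ((p + q + 1 : ℤ) : ZMod n)
      = ∑ i, ((u i + v i : ℕ) : ZMod n) * (b i * l i) + (p + q : ℕ) + 1 := by
        simp only [fl, ← mul_assoc]
        push_cast
        simp only [mul_comm, add_assoc]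
    _ = a := by rw [h, sub_add_cancel]

end SignPatterns

section Parameters

variable {k : ℕ} {c : ℝ}

lemma mOf_pow_le (hc : 0 ≤ c) {n : ℕ} (hn : 0 < n) :
    (mOf k c n : ℝ) ^ (2 * k + 2) ≤ (c + 1) ^ (2 * k + 2) * n := by
  set r : ℝ := (n : ℝ) ^ ((1 : ℝ) / (2 * (k : ℝ) + 2)) with hr
  have hr1 : 1 ≤ r := Real.one_le_rpow (mod_cast hn) (by positivity)
  have hrpow : r ^ (2 * k + 2) = n := by
    rw [hr, one_div]
    exact_mod_cast Real.rpow_inv_natCast_pow n.cast_nonneg (by omega : 2 * k + 2 ≠ 0)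
  have hceil : (mOf k c n : ℝ) ≤ (c + 1) * r := by
    have : (mOf k c n : ℝ) < c * r + 1 := Nat.ceil_lt_add_one (by positivity)
    linarith
  calc (mOf k c n : ℝ) ^ (2 * k + 2) ≤ ((c + 1) * r) ^ (2 * k + 2) := by gcongr
    _ = _ := by rw [mul_pow, hrpow]

lemma tendsto_mOf_atTop (hc : 0 < c) : Tendsto (mOf k c) atTop atTop :=
  tendsto_nat_ceil_atTop.comp <| ((tendsto_rpow_atTop (by positivity)).comp
    tendsto_natCast_atTop_atTop).const_mul_atTop hc

variable {n m M L α δ : ℝ}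

lemma le_mul_pow_mul_of_half_le (hn : 0 ≤ n) (hm : 0 < m) (hα : 0 ≤ α) (hδ : 0 ≤ δ)
    (hαδ : 2 ^ (k + 3) ≤ α * δ) (hM : m / 2 ≤ M) (hL : α * (n / m ^ k) / 4 ≤ L) :
    n ≤ δ / 2 * (M ^ k * L) := by
  have hM0 : 0 ≤ M := (half_pos hm).le.trans hM
  calc n = 2 ^ (k + 3) * (n / 2 ^ (k + 3)) := by field_simp
    _ ≤ α * δ * (n / 2 ^ (k + 3)) := by gcongr
    _ = δ / 2 * ((m / 2) ^ k * (α * (n / m ^ k) / 4)) := by rw [div_pow]; field_simp; ring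
    _ ≤ δ / 2 * (M ^ k * L) := by gcongr

lemma mul_sq_le_mul_sq_of_pow_le (hn : 0 ≤ n) (hm : 0 < m) (hα : 0 ≤ α) (hδ : 0 ≤ δ)
    (hmn : 32 * m ^ (2 * k + 2) ≤ α ^ 2 * δ * n) (hM0 : 0 ≤ M) (hM : M ≤ m)
    (hL : α * (n / m ^ k) / 4 ≤ L) : n * M ^ 2 ≤ δ / 2 * L ^ 2 := by
  calc n * M ^ 2 ≤ n * m ^ 2 := by gcongr
    _ = n / (32 * m ^ (2 * k)) * (32 * m ^ (2 * k + 2)) := by field_simp; ring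
    _ ≤ n / (32 * m ^ (2 * k)) * (α ^ 2 * δ * n) := by gcongr
    _ = δ / 2 * (α * (n / m ^ k) / 4) ^ 2 := by field_simp; ring
    _ ≤ δ / 2 * L ^ 2 := by gcongr

lemma four_le_mul_div_pow {K : ℝ} (hn : 0 < n) (hm : 1 ≤ m) (hαK : 4 * K ≤ α)
    (hmn : m ^ (2 * k + 2) ≤ K * n) : 4 ≤ α * (n / m ^ k) := by
  rw [← mul_div_assoc, le_div_iff₀ (by positivity)]
  calc 4 * m ^ k ≤ 4 * m ^ (2 * k + 2) := by gcongr; omega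
    _ ≤ 4 * (K * n) := by gcongr
    _ ≤ α * n := by rw [← mul_assoc]; gcongr

lemma mul_div_pow_le (hk : k ≠ 0) (hn : 0 ≤ n) (hm : 1 ≤ m) (hαm : α ≤ m) :
    α * (n / m ^ k) ≤ n := by
  rw [← mul_div_assoc, div_le_iff₀ (by positivity), mul_comm]
  gcongr
  exact hαm.trans (le_self_pow₀ hm hk)

lemma exists_le_two_mul_of_four_le {x : ℝ} (hx : 4 ≤ x) : ∃ L : ℕ, x / 4 ≤ L ∧ 2 * (L : ℝ) ≤ x := by
  have hfloor : (⌊x / 2⌋₊ : ℝ) ≤ x / 2 := Nat.floor_le (by linarith)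
  have hlt := Nat.lt_floor_add_one (x / 2)
  exact ⟨⌊x / 2⌋₊, by linarith, by linarith⟩

/-- `M` is the side of the boxes and `L` the length of the segments. The last bound compares the
mean weight of the nontrivial characters with `δ` times the weight of the trivial one. -/
lemma exists_box_sizes {n m : ℕ} {K : ℝ} (hk : 1 ≤ k) (hn : 0 < n) (hδ : 0 < δ) (hα : 1 ≤ α)
    (hαK : 4 * K ≤ α) (hαδ : 2 ^ (k + 3) ≤ α * δ) (hαδK : 32 * K ≤ α * δ) (hαm : α ≤ m)
    (hmn : (m : ℝ) ^ (2 * k + 2) ≤ K * n) :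
    ∃ M L : ℕ, 0 < M ∧ 2 * M ≤ m + 1 ∧ 0 < L ∧ L ≤ n ∧ 2 * (L : ℝ) ≤ α * (n / (m : ℝ) ^ k) ∧
      (M : ℝ) ^ k * (n * L) + n * (M : ℝ) ^ (2 * k + 2) ≤
        δ * ((M : ℝ) ^ (2 * k) * (L : ℝ) ^ 2) := by
  have hm : (1 : ℝ) ≤ m := hα.trans hαm
  have hn' : (0 : ℝ) < n := mod_cast hn
  have hαs := four_le_mul_div_pow hn' hm hαK hmn
  have hαsn := mul_div_pow_le (by omega : k ≠ 0) hn'.le hm hαm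
  obtain ⟨L, hLge, hLle⟩ := exists_le_two_mul_of_four_le hαs
  obtain ⟨M, hMge, hMle⟩ : ∃ M : ℕ, m ≤ 2 * M ∧ 2 * M ≤ m + 1 := ⟨(m + 1) / 2, by omega, by omega⟩
  have hm0 : 0 < m := by exact_mod_cast zero_lt_one.trans_le hm
  have hM : (m : ℝ) / 2 ≤ M := by
    rw [div_le_iff₀' two_pos]
    exact_mod_cast hMge
  have hmα : 32 * (m : ℝ) ^ (2 * k + 2) ≤ α ^ 2 * δ * n := by
    calc 32 * (m : ℝ) ^ (2 * k + 2) ≤ 32 * (K * n) := by gcongr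
      _ = 32 * K * n := by ring
      _ ≤ α * δ * n := by gcongr
      _ ≤ α ^ 2 * δ * n := by gcongr; exact le_self_pow₀ hα two_ne_zero
  have hlarge := le_mul_pow_mul_of_half_le hn'.le (by positivity) (by positivity) hδ.le hαδ hM hLge
  have hsmall := mul_sq_le_mul_sq_of_pow_le hn'.le (by positivity) (by positivity) hδ.le hmα
    M.cast_nonneg (mod_cast (by omega : M ≤ m)) hLge
  refine ⟨M, L, by omega, hMle, by exact_mod_cast (by linarith : (0 : ℝ) < L),
    by exact_mod_cast (by linarith : (L : ℝ) ≤ n), hLle, ?_⟩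
  calc (M : ℝ) ^ k * (n * L) + n * (M : ℝ) ^ (2 * k + 2)
      = (M : ℝ) ^ k * L * n + (M : ℝ) ^ (2 * k) * (n * (M : ℝ) ^ 2) := by ring
    _ ≤ (M : ℝ) ^ k * L * (δ / 2 * ((M : ℝ) ^ k * L)) +
        (M : ℝ) ^ (2 * k) * (δ / 2 * (L : ℝ) ^ 2) := by gcongr
    _ = δ * ((M : ℝ) ^ (2 * k) * (L : ℝ) ^ 2) := by ring

lemma exists_eventually_box_sizes (hk : 1 ≤ k) (hc : 0 < c) (hδ : 0 < δ) :
    ∃ α : ℝ, 0 < α ∧ ∀ᶠ n : ℕ in atTop, ∃ M L : ℕ,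
      0 < M ∧ 2 * M ≤ mOf k c n + 1 ∧ 0 < L ∧ L ≤ n ∧ 2 * (L : ℝ) ≤ α * sOf k c n ∧
        (M : ℝ) ^ k * (n * L) + n * (M : ℝ) ^ (2 * k + 2) ≤
          δ * ((M : ℝ) ^ (2 * k) * (L : ℝ) ^ 2) := by
  set K : ℝ := (c + 1) ^ (2 * k + 2)
  obtain ⟨α, hα1, hαK, hαδ, hαδK⟩ :
      ∃ α : ℝ, 1 ≤ α ∧ 4 * K ≤ α ∧ 2 ^ (k + 3) / δ ≤ α ∧ 32 * K / δ ≤ α :=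
    ((eventually_ge_atTop _).and <| (eventually_ge_atTop _).and <|
      (eventually_ge_atTop _).and <| eventually_ge_atTop _).exists
  rw [div_le_iff₀ hδ] at hαδ hαδK
  refine ⟨α, by linarith, ?_⟩
  filter_upwards [eventually_gt_atTop 0, (tendsto_mOf_atTop hc).eventually_ge_atTop ⌈α⌉₊]
    with n hn hαm
  exact exists_box_sizes hk hn hδ hα1 hαK hαδ hαδK (Nat.ceil_le.1 hαm) (mOf_pow_le hc.le hn)

end Parameters

theorem mapped_points_spread_evenly_general {k : ℕ} (hk : 1 ≤ k) {c : ℝ} (hc : 0 < c)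
    {δ : ℝ} (hδ : 0 < δ) :
    ∃ α : ℝ, 0 < α ∧ ∃ N : ℕ, ∀ (n : ℕ) [NeZero n], N ≤ n →
      1 - δ ≤ lProb n k (fun l =>
        ∀ b : Fin k → ℤ, IsSign b →
          ∀ a : ZMod n,
            ∃ y' y'' : Fin k → ℤ, inYmb b (mOf k c n) y' ∧ inYmb b (mOf k c n) y'' ∧
              ∃ t' t'' : ℤ,
                0 < t' ∧ (t' : ℝ) < α * sOf k c n ∧
                0 < t'' ∧ (t'' : ℝ) < α * sOf k c n ∧
                a - fl l y' = (t' : ZMod n) ∧ fl l y'' - a = (t'' : ZMod n)) := by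
  obtain ⟨α, hα, hev⟩ := exists_eventually_box_sizes hk hc hδ
  obtain ⟨N, hN⟩ := eventually_atTop.1 hev
  refine ⟨α, hα, N, fun n _ hn => ?_⟩
  obtain ⟨M, L, hM, hMm, hL, hLn, hLs, hbound⟩ := hN n hn
  refine (one_sub_le_lProb_fourierTail_lt hM hL hLn hbound).trans
    (lProb_mono fun l hl b hb a => ?_)
  have hlt : ∀ t : ℤ, t < 2 * L → (t : ℝ) < α * sOf k c n := fun t ht =>
    lt_of_lt_of_le (by exact_mod_cast ht) hLs
  obtain ⟨y', hy', t', ht', htL', hleft⟩ := exists_inYmb_fl_add_eq hl hMm hb a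
  obtain ⟨z, hz, t'', ht'', htL'', hright⟩ := exists_inYmb_fl_add_eq hl hMm hb.neg (-a)
  refine ⟨y', -z, hy', hz.neg, t', t'', ht', hlt t' htL', ht'', hlt t'' htL'', ?_, ?_⟩
  · rw [← hleft, add_sub_cancel_left]
  · rw [fl_neg]
    linear_combination -hright

/-- for every `0 < δ₄ < 1` there are `α₄ > 0` and `N` such that for all
`n ≥ N`, with probability at least `1 - δ₄` over `l`: for every sign pattern `b` and every
`y ∈ Y_m^b` there are `y', y'' ∈ Y_m^b` and integers `0 < t', t'' < α₄ s` with
`f_l(y) - f_l(y') = t' mod n` and `f_l(y'') - f_l(y) = t'' mod n`: every mapped point has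
mapped neighbors on both sides at distance of order `s`. -/
theorem mapped_points_spread_evenly (k : ℕ) (hk : 1 ≤ k) (c : ℝ) (hc : 0 < c)
    (δ₄ : ℝ) (h0 : 0 < δ₄) (h1 : δ₄ < 1) :
    ∃ α₄ : ℝ, 0 < α₄ ∧ ∃ N : ℕ, ∀ (n : ℕ) [NeZero n], N ≤ n →
      1 - δ₄ ≤ lProb n k (fun l =>
        ∀ b : Fin k → ℤ, IsSign b →
          ∀ y : Fin k → ℤ, inYmb b (mOf k c n) y →
            ∃ y' y'' : Fin k → ℤ, inYmb b (mOf k c n) y' ∧ inYmb b (mOf k c n) y'' ∧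
              ∃ t' t'' : ℤ,
                0 < t' ∧ (t' : ℝ) < α₄ * sOf k c n ∧
                0 < t'' ∧ (t'' : ℝ) < α₄ * sOf k c n ∧
                fl l y - fl l y' = (t' : ZMod n) ∧ fl l y'' - fl l y = (t'' : ZMod n)) := by
  obtain ⟨α, hα, N, hN⟩ := mapped_points_spread_evenly_general hk hc h0
  exact ⟨α, hα, N, fun n _ hn =>
    (hN n hn).trans (lProb_mono fun l hl b hb y _ => hl b hb (fl l y))⟩
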